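/- arXiv:2211.06521 — 3 statements merged into one kernel-verified Lean document; each statement's English description precedes it below -/
import Mathlib

section
/- Let G be a multigraph, k ≥ 1, and let G[S] be a maximal k-edge-connected subgraph of G. Let Q be the multigraph obtained from G by contracting S into a single new vertex v_S: the vertices of Q are (V(G) ∖ S) ∪ {v_S}; every edge of G with both endpoints outside S is kept; every edge of G with exactly one endpoint in S becomes an edge between its other endpoint and v_S (multiplicities kept); every edge with both endpoints in S is discarded. Then the vertex sets of the maximal k-edge-connected subgraphs of Q are precisely {v_S} together with the vertex sets of the maximal k-edge-connected subgraphs of G other than S. -/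
/-!
By the cut form of connectivity, `G[U]` is `k`-edge-connected iff every vertex set splitting `U`
is crossed by at least `k` edges of `G[U]`. Let `f` be a map of the vertex set all of whose fibres
are `k`-edge-connected, and let `f` also denote the induced map of multigraphs. Cuts of the image
correspond to those cuts of `G` that split no fibre, and a cut that splits a fibre has at least `k`
edges anyway. Hence `T` is `k`-edge-connected in the image iff its preimage is in `G`. Since images
of `k`-edge-connected sets are always `k`-edge-connected, the same holds with maximality added.
Contracting `S` is the case in which the fibres are `S` and singletons; and distinct maximal
`k`-edge-connected sets are disjoint, so those other than `S` avoid `S`.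
-/

universe u

structure Multigraph (V : Type u) where
  edges : Multiset (Sym2 V)
  loopless : ∀ e ∈ edges, ¬ e.IsDiag

namespace Multigraph

variable {V : Type u}

/-- Reachability via the edges of a multiset of (undirected) edges. -/
def MReach (F : Multiset (Sym2 V)) : V → V → Prop :=
  Relation.ReflTransGen (fun x y => s(x, y) ∈ F)

/-- Reachability in a multigraph. -/
def Reachable (G : Multigraph V) : V → V → Prop := MReach G.edges

open Classical in
/-- Delete a multiset of edges. -/
noncomputable def deleteEdges (G : Multigraph V) (F : Multiset (Sym2 V)) : Multigraph V :=
  ⟨G.edges - F, fun e he => G.loopless e (Multiset.mem_of_le (tsub_le_self) he)⟩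

/-- `lam G x y` : the minimum number of edges whose deletion disconnects `x` from `y`
(`⊤` if no set of edges disconnects them, e.g. when `x = y`). -/
noncomputable def lam (G : Multigraph V) (x y : V) : ℕ∞ :=
  sInf {n : ℕ∞ | ∃ F : Multiset (Sym2 V), F ≤ G.edges ∧
      ¬ (G.deleteEdges F).Reachable x y ∧ n = (Multiset.card F : ℕ∞)}

open Classical in
/-- The multigraph with edge multiset `F`, discarding self-loops. -/
noncomputable def ofEdges (F : Multiset (Sym2 V)) : Multigraph V :=
  ⟨F.filter (fun e => ¬ e.IsDiag), fun e he => (Multiset.mem_filter.mp he).2⟩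

open Classical in
/-- The subgraph of `G` induced by the vertex set `S`. -/
noncomputable def induce (G : Multigraph V) (S : Set V) : Multigraph V :=
  ⟨G.edges.filter (fun e => ∀ v ∈ e, v ∈ S), fun e he =>
      G.loopless e (Multiset.mem_filter.mp he).1⟩

/-- The induced subgraph `G[S]` is `k`-edge-connected. -/
def IsKEdgeConnectedSet (G : Multigraph V) (k : ℕ) (S : Set V) : Prop :=
  S.Nonempty ∧ ∀ x ∈ S, ∀ y ∈ S, (k : ℕ∞) ≤ (G.induce S).lam x y

/-- `G[S]` is a maximal `k`-edge-connected subgraph of `G`. -/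
def IsMaxKEdgeConnectedSubgraph (G : Multigraph V) (k : ℕ) (S : Set V) : Prop :=
  G.IsKEdgeConnectedSet k S ∧
    ∀ T : Set V, S ⊆ T → G.IsKEdgeConnectedSet k T → T = S


open Classical in
/-- Contract the vertex set `S` of `G` into a single new vertex `none`; vertices outside
`S` survive as `some v`, edges inside `S` are discarded, all other edges are kept. -/
noncomputable def contract (G : Multigraph V) (S : Set V) :
    Multigraph (Option {v : V // v ∉ S}) :=
  ofEdges (G.edges.map (Sym2.map (fun v => if h : v ∈ S then none else some ⟨v, h⟩)))

end Multigraph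

namespace Multigraph

variable {V : Type u} {W : Type*} {G H : Multigraph V} {k : ℕ} {x y : V} {A B U X Y : Set V}

section Cut

/-- The edge `e` has one endpoint in `A` and the other outside `A`. -/
def Crosses (A : Set V) (e : Sym2 V) : Prop :=
  ∃ u ∈ A, ∃ v ∉ A, e = s(u, v)

theorem crosses_mk_iff : Crosses A s(x, y) ↔ (x ∈ A ↔ y ∉ A) := by
  simp only [Crosses, Sym2.eq_iff]
  grind

theorem Crosses.not_isDiag {e : Sym2 V} (he : Crosses A e) : ¬ e.IsDiag := by
  obtain ⟨u, hu, v, hv, rfl⟩ := he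
  exact fun huv => hv (Sym2.mk_isDiag_iff.1 huv ▸ hu)

theorem crosses_map_iff {f : V → W} {A : Set W} {e : Sym2 V} :
    Crosses A (e.map f) ↔ Crosses (f ⁻¹' A) e := by
  induction e with
  | _ x y => simp only [Sym2.map_mk, crosses_mk_iff, Set.mem_preimage]

open Classical in
/-- The cut (edge boundary) of a vertex set `A`: the edges of `G` between `A` and its complement,
with multiplicity. -/
noncomputable def cut (G : Multigraph V) (A : Set V) : Multiset (Sym2 V) :=
  G.edges.filter (Crosses A)

theorem cut_le_edges (A : Set V) : G.cut A ≤ G.edges := by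
  classical exact Multiset.filter_le _ _

theorem cut_le_cut (h : G.edges ≤ H.edges) (A : Set V) : G.cut A ≤ H.cut A := by
  classical exact Multiset.filter_le_filter _ h

theorem not_reachable_deleteEdges_cut (hx : x ∈ A) (hy : y ∉ A) :
    ¬ (G.deleteEdges (G.cut A)).Reachable x y := by
  classical
  intro hxy
  refine hy ?_
  clear hy
  induction hxy with
  | refl => exact hx
  | tail _ hbc hb =>
    simp only [deleteEdges, cut, Multiset.sub_filter_eq_filter_not, Multiset.mem_filter] at hbc
    by_contra hc
    exact hbc.2 ⟨_, hb, _, hc, rfl⟩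

theorem cut_setOf_reachable_deleteEdges_le (F : Multiset (Sym2 V)) (x : V) :
    G.cut {v | (G.deleteEdges F).Reachable x v} ≤ F := by
  classical
  refine Multiset.le_iff_count.2 fun e => ?_
  by_contra! hlt
  have he : Crosses {v | (G.deleteEdges F).Reachable x v} e :=
    (Multiset.mem_filter.1 (Multiset.count_pos.1 (Nat.zero_lt_of_lt hlt))).2
  rw [cut, Multiset.count_filter_of_pos he, ← tsub_pos_iff_lt, ← Multiset.count_sub,
    Multiset.count_pos] at hlt
  obtain ⟨u, hu, v, hv, rfl⟩ := he
  exact hv (Relation.ReflTransGen.tail hu hlt)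

theorem le_lam_iff {n : ℕ∞} :
    n ≤ G.lam x y ↔ ∀ A : Set V, x ∈ A → y ∉ A → n ≤ (G.cut A).card := by
  constructor
  · intro h A hx hy
    exact h.trans <| sInf_le
      ⟨G.cut A, cut_le_edges A, not_reachable_deleteEdges_cut hx hy, rfl⟩
  · intro h
    refine le_sInf ?_
    rintro _ ⟨F, -, hF, rfl⟩
    exact (h _ Relation.ReflTransGen.refl hF).trans
      (Nat.cast_le.2 (Multiset.card_le_card (cut_setOf_reachable_deleteEdges_le F x)))

end Cut

section IsKEdgeConnectedSet

theorem induce_edges_mono (h : X ⊆ Y) : (G.induce X).edges ≤ (G.induce Y).edges := by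
  classical exact Multiset.monotone_filter_right _ fun _ he v hv => h (he v hv)

theorem cut_induce_congr (h : ∀ v ∈ U, v ∈ A ↔ v ∈ B) :
    (G.induce U).cut A = (G.induce U).cut B := by
  classical
  refine Multiset.filter_congr fun e he => ?_
  have heU : ∀ v ∈ e, v ∈ U := (Multiset.mem_filter.1 he).2
  induction e with
  | _ x y =>
    rw [crosses_mk_iff, crosses_mk_iff, h x (heU x (Sym2.mem_mk_left x y)),
      h y (heU y (Sym2.mem_mk_right x y))]

theorem isKEdgeConnectedSet_iff :
    G.IsKEdgeConnectedSet k U ↔ U.Nonempty ∧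
      ∀ A : Set V, (U ∩ A).Nonempty → (U \ A).Nonempty → k ≤ ((G.induce U).cut A).card := by
  simp only [IsKEdgeConnectedSet, le_lam_iff, Nat.cast_le]
  refine and_congr_right fun _ => ⟨?_, ?_⟩
  · rintro h A ⟨x, hxU, hxA⟩ ⟨y, hyU, hyA⟩
    exact h x hxU y hyU A hxA hyA
  · intro h x hxU y hyU A hxA hyA
    exact h A ⟨x, hxU, hxA⟩ ⟨y, hyU, hyA⟩

theorem isKEdgeConnectedSet_singleton (G : Multigraph V) (k : ℕ) (x : V) :
    G.IsKEdgeConnectedSet k {x} := by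
  refine isKEdgeConnectedSet_iff.2 ⟨Set.singleton_nonempty x, ?_⟩
  rintro A ⟨_, rfl, hA⟩ ⟨_, rfl, hA'⟩
  exact absurd hA hA'

theorem IsKEdgeConnectedSet.le_card_cut_induce (hX : G.IsKEdgeConnectedSet k X) (hXU : X ⊆ U)
    (hA : (X ∩ A).Nonempty) (hA' : (X \ A).Nonempty) : k ≤ ((G.induce U).cut A).card :=
  ((isKEdgeConnectedSet_iff.1 hX).2 A hA hA').trans
    (Multiset.card_le_card (cut_le_cut (induce_edges_mono hXU) A))

theorem IsKEdgeConnectedSet.union (hX : G.IsKEdgeConnectedSet k X)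
    (hY : G.IsKEdgeConnectedSet k Y) (hXY : (X ∩ Y).Nonempty) :
    G.IsKEdgeConnectedSet k (X ∪ Y) := by
  refine isKEdgeConnectedSet_iff.2 ⟨hX.1.inl, ?_⟩
  intro A hA hA'
  obtain ⟨z, hzX, hzY⟩ := hXY
  -- A set splitting `X ∪ Y` separates the common vertex `z` from a vertex of `X` or of `Y`.
  have split_left := hX.le_card_cut_induce (A := A) (Set.subset_union_left (t := Y))
  have split_right := hY.le_card_cut_induce (A := A) (Set.subset_union_right (s := X))
  by_cases hz : z ∈ A
  · obtain ⟨y, hyX | hyY, hyA⟩ := hA'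
    · exact split_left ⟨z, hzX, hz⟩ ⟨y, hyX, hyA⟩
    · exact split_right ⟨z, hzY, hz⟩ ⟨y, hyY, hyA⟩
  · obtain ⟨x, hxX | hxY, hxA⟩ := hA
    · exact split_left ⟨x, hxX, hxA⟩ ⟨z, hzX, hz⟩
    · exact split_right ⟨x, hxY, hxA⟩ ⟨z, hzY, hz⟩

theorem IsMaxKEdgeConnectedSubgraph.disjoint (hX : G.IsMaxKEdgeConnectedSubgraph k X)
    (hY : G.IsMaxKEdgeConnectedSubgraph k Y) (hne : X ≠ Y) : Disjoint X Y := by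
  by_contra hXY
  have hunion := hX.1.union hY.1 (Set.not_disjoint_iff_nonempty_inter.1 hXY)
  exact hne ((hX.2 _ Set.subset_union_left hunion).symm.trans
    (hY.2 _ Set.subset_union_right hunion))

end IsKEdgeConnectedSet

section Map

variable {f : V → W} {T : Set W}

/-- The image of `G` under a map of the vertex set: all vertices of a fibre of `f` are identified,
and edges that become loops are discarded. -/
noncomputable def map (f : V → W) (G : Multigraph V) : Multigraph W :=
  ofEdges (G.edges.map (Sym2.map f))

theorem induce_map (f : V → W) (G : Multigraph V) (T : Set W) :
    (G.map f).induce T = (G.induce (f ⁻¹' T)).map f := by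
  classical
  simp only [map, ofEdges, induce, mk.injEq]
  rw [Multiset.filter_comm, Multiset.filter_map]
  simp only [Function.comp_def, Sym2.mem_map, forall_exists_index, and_imp,
    forall_apply_eq_imp_iff₂, Set.mem_preimage]

theorem cut_map (f : V → W) (G : Multigraph V) (A : Set W) :
    (G.map f).cut A = (G.cut (f ⁻¹' A)).map (Sym2.map f) := by
  classical
  have crosses_and_not_isDiag_iff (e : Sym2 W) : Crosses A e ∧ ¬ e.IsDiag ↔ Crosses A e :=
    and_iff_left_of_imp Crosses.not_isDiag
  simp only [cut, map, ofEdges, Multiset.filter_filter, crosses_and_not_isDiag_iff]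
  simp only [Multiset.filter_map, Function.comp_def, crosses_map_iff]

theorem card_cut_induce_map (f : V → W) (G : Multigraph V) (T A : Set W) :
    (((G.map f).induce T).cut A).card = ((G.induce (f ⁻¹' T)).cut (f ⁻¹' A)).card := by
  rw [induce_map, cut_map, Multiset.card_map]

theorem IsKEdgeConnectedSet.image (hU : G.IsKEdgeConnectedSet k U) (f : V → W) :
    (G.map f).IsKEdgeConnectedSet k (f '' U) := by
  refine isKEdgeConnectedSet_iff.2 ⟨hU.1.image f, ?_⟩
  rintro A ⟨_, ⟨x, hxU, rfl⟩, hxA⟩ ⟨_, ⟨y, hyU, rfl⟩, hyA⟩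
  rw [card_cut_induce_map]
  exact hU.le_card_cut_induce (Set.subset_preimage_image f U) ⟨x, hxU, hxA⟩ ⟨y, hyU, hyA⟩

theorem IsKEdgeConnectedSet.preimage (hT : (G.map f).IsKEdgeConnectedSet k T)
    (hf : ∀ w ∈ T, G.IsKEdgeConnectedSet k (f ⁻¹' {w})) :
    G.IsKEdgeConnectedSet k (f ⁻¹' T) := by
  rw [isKEdgeConnectedSet_iff] at hT ⊢
  obtain ⟨⟨t, ht⟩, hcut⟩ := hT
  refine ⟨(hf t ht).1.mono (Set.preimage_mono (Set.singleton_subset_iff.2 ht)), ?_⟩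
  rintro A ⟨x, hxT, hxA⟩ ⟨y, hyT, hyA⟩
  by_cases hsplit : ∃ w ∈ T, (f ⁻¹' {w} ∩ A).Nonempty ∧ (f ⁻¹' {w} \ A).Nonempty
  · obtain ⟨w, hw, hA, hA'⟩ := hsplit
    exact (hf w hw).le_card_cut_induce
      (Set.preimage_mono (Set.singleton_subset_iff.2 hw)) hA hA'
  · let B : Set W := {w | f ⁻¹' {w} ⊆ A}
    have mem_B_iff : ∀ v ∈ f ⁻¹' T, f v ∈ B ↔ v ∈ A := by
      refine fun v hv => ⟨fun h => h rfl, fun hvA => ?_⟩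
      by_contra hB
      exact hsplit ⟨f v, hv, ⟨v, rfl, hvA⟩, Set.sdiff_nonempty.2 hB⟩
    calc k ≤ (((G.map f).induce T).cut B).card :=
          hcut B ⟨f x, hxT, (mem_B_iff x hxT).2 hxA⟩ ⟨f y, hyT, mt (mem_B_iff y hyT).1 hyA⟩
      _ = ((G.induce (f ⁻¹' T)).cut (f ⁻¹' B)).card := card_cut_induce_map f G T B
      _ = ((G.induce (f ⁻¹' T)).cut A).card := congrArg _ (cut_induce_congr mem_B_iff)

theorem isMaxKEdgeConnectedSubgraph_map_iff
    (hf : ∀ w, G.IsKEdgeConnectedSet k (f ⁻¹' {w})) :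
    (G.map f).IsMaxKEdgeConnectedSubgraph k T ↔
      G.IsMaxKEdgeConnectedSubgraph k (f ⁻¹' T) := by
  have hsurj : Function.Surjective f := fun w => (hf w).1
  constructor
  · rintro ⟨hT, hmax⟩
    refine ⟨hT.preimage fun w _ => hf w, fun U hTU hU => ?_⟩
    have hUT : f '' U = T :=
      hmax _ ((Set.image_preimage_eq T hsurj).symm.subset.trans (Set.image_mono hTU)) (hU.image f)
    exact (Set.image_subset_iff.1 hUT.subset).antisymm hTU
  · rintro ⟨hT, hmax⟩
    refine ⟨Set.image_preimage_eq T hsurj ▸ hT.image f, fun T' hTT' hT' => ?_⟩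
    exact hsurj.preimage_injective
      (hmax _ (Set.preimage_mono hTT') (hT'.preimage fun w _ => hf w))

end Map

section Contract

variable {S : Set V} {T : Set (Option {v : V // v ∉ S})}

open Classical in
/-- The vertex map of the contraction of `S`: `S` is sent to the new vertex `none`, and every other
vertex to itself. -/
noncomputable def collapse (S : Set V) (v : V) : Option {v : V // v ∉ S} :=
  if h : v ∈ S then none else some ⟨v, h⟩

theorem contract_eq_map_collapse (G : Multigraph V) (S : Set V) :
    G.contract S = G.map (collapse S) :=
  rfl

theorem collapse_eq_none_iff {v : V} : collapse S v = none ↔ v ∈ S := by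
  simp [collapse]

theorem collapse_eq_some_iff {v : V} {w : {v : V // v ∉ S}} :
    collapse S v = some w ↔ v = w := by
  grind [collapse]

theorem collapse_surjective (hS : S.Nonempty) : Function.Surjective (collapse S) := by
  rintro (_ | w)
  · exact hS.imp fun _ => collapse_eq_none_iff.2
  · exact ⟨w, collapse_eq_some_iff.2 rfl⟩

theorem preimage_collapse_none : collapse S ⁻¹' {none} = S :=
  Set.ext fun _ => collapse_eq_none_iff

theorem preimage_collapse_some (w : {v : V // v ∉ S}) : collapse S ⁻¹' {some w} = {↑w} :=
  Set.ext fun _ => collapse_eq_some_iff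

theorem preimage_collapse_eq_self_iff (hS : S.Nonempty) :
    collapse S ⁻¹' T = S ↔ T = {none} := by
  rw [← (collapse_surjective hS).preimage_injective.eq_iff, preimage_collapse_none]

theorem preimage_collapse_eq_iff (hS : S.Nonempty) (hU : Disjoint U S) :
    collapse S ⁻¹' T = U ↔ T = {w | ∃ (v : V) (h : v ∉ S), v ∈ U ∧ w = some ⟨v, h⟩} := by
  have preimage_eq :
      collapse S ⁻¹' {w | ∃ (v : V) (h : v ∉ S), v ∈ U ∧ w = some ⟨v, h⟩} = U := by
    ext v
    simp only [Set.mem_preimage, Set.mem_ofPred_eq, collapse_eq_some_iff]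
    exact ⟨fun ⟨_, _, hw, hvw⟩ => hvw ▸ hw, fun hv => ⟨v, hU.notMem_of_mem_left hv, hv, rfl⟩⟩
  rw [← (collapse_surjective hS).preimage_injective.eq_iff, preimage_eq]

theorem isMaxKEdgeConnectedSubgraph_contract_iff (hS : G.IsKEdgeConnectedSet k S) :
    (G.contract S).IsMaxKEdgeConnectedSubgraph k T ↔
      G.IsMaxKEdgeConnectedSubgraph k (collapse S ⁻¹' T) := by
  rw [contract_eq_map_collapse]
  refine isMaxKEdgeConnectedSubgraph_map_iff ?_
  rintro (_ | w)
  · rwa [preimage_collapse_none]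
  · rw [preimage_collapse_some]
    exact isKEdgeConnectedSet_singleton G k w

end Contract

end Multigraph

open Multigraph in
theorem contract_max_kec_subgraphs_general {V : Type u}
    (G : Multigraph V) (k : ℕ) (S : Set V) (hS : G.IsMaxKEdgeConnectedSubgraph k S) :
    ∀ T : Set (Option {v : V // v ∉ S}),
      (G.contract S).IsMaxKEdgeConnectedSubgraph k T ↔
        (T = {(none : Option {v : V // v ∉ S})} ∨
          ∃ U : Set V, G.IsMaxKEdgeConnectedSubgraph k U ∧ U ≠ S ∧
            T = {w | ∃ (v : V) (h : v ∉ S), v ∈ U ∧ w = some ⟨v, h⟩}) := by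
  intro T
  have hne : S.Nonempty := hS.1.1
  rw [isMaxKEdgeConnectedSubgraph_contract_iff hS.1]
  constructor
  · intro hT
    by_cases hTS : collapse S ⁻¹' T = S
    · exact .inl ((preimage_collapse_eq_self_iff hne).1 hTS)
    · exact .inr ⟨_, hT, hTS, (preimage_collapse_eq_iff hne (hT.disjoint hS hTS)).1 rfl⟩
  · rintro (hT | ⟨U, hU, hUS, hT⟩)
    · rwa [(preimage_collapse_eq_self_iff hne).2 hT]
    · rwa [(preimage_collapse_eq_iff hne (hU.disjoint hS hUS)).2 hT]

theorem contract_max_kec_subgraphs {V : Type u} [Fintype V]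
    (G : Multigraph V) (k : ℕ) (hk : 1 ≤ k) (S : Set V)
    (hS : G.IsMaxKEdgeConnectedSubgraph k S) :
    ∀ T : Set (Option {v : V // v ∉ S}),
      (G.contract S).IsMaxKEdgeConnectedSubgraph k T ↔
        (T = {(none : Option {v : V // v ∉ S})} ∨
          ∃ U : Set V, G.IsMaxKEdgeConnectedSubgraph k U ∧ U ≠ S ∧
            T = {w | ∃ (v : V) (h : v ∉ S), v ∈ U ∧ w = some ⟨v, h⟩}) :=
  contract_max_kec_subgraphs_general G k S hS
end

section
/- Let G be a connected multigraph and let x, y be vertices of G with λ_G(x,y) = 1, so that x and y lie in two different 2-edge-connected components of G. Let T be the tree obtained from G by contracting each 2-edge-connected component of G to a single vertex, and let X₁, …, X_ℓ be the 2-edge-connected components of G corresponding to the vertices of the unique path in T from the component containing x to the component containing y (so x ∈ X₁ and y ∈ X_ℓ). Let G' be the multigraph obtained from G by adding one new edge with endpoints x and y, and set U = X₁ ∪ … ∪ X_ℓ. Then: (i) λ_{G'}(u,v) ≥ 2 for every pair of vertices u, v ∈ U; (ii) λ_{G'}(u,v) = λ_G(u,v) for every pair of vertices u, v not both belonging to U;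 and (iii) U is a 2-edge-connected component of G'. -/
universe u

namespace Multigraph

variable {V : Type u}

/-- `C` is a `k`-edge-connected component of `G`: a maximal set of pairwise
`k`-edge-connected vertices. -/
def IsKEdgeConnectedComponent (G : Multigraph V) (k : ℕ) (C : Set V) : Prop :=
  (∀ x ∈ C, ∀ y ∈ C, (k : ℕ∞) ≤ G.lam x y) ∧
    ∀ D : Set V, C ⊆ D → (∀ x ∈ D, ∀ y ∈ D, (k : ℕ∞) ≤ G.lam x y) → D = C

/-- Add one new edge with endpoints `x` and `y` (discarded if it would be a self-loop). -/
noncomputable def addEdge (G : Multigraph V) (x y : V) : Multigraph V :=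
  ofEdges (s(x, y) ::ₘ G.edges)

end Multigraph

/-!
Deleting a single edge `e` cuts a vertex `u ∉ U` off from all of `U`: take the edge through which a
walk from `u` first enters `U`, which must be a bridge since `U` is closed under
2-edge-connectedness. The new edge lies beyond `e`. Hence it does not help to join `u` to a vertex
on its own side of `e`, as a walk using it crosses `e` twice, and `λ(u, v) ≤ 1` for each `v` beyond
`e`, with or without the new edge.

Inside `U`, deleting one edge of `G` breaks the path of components in at most one place, leaving
every vertex of `U` joined to `x` or to `y`, and the new edge joins `x` to `y`.
-/

namespace Multigraph

variable {V : Type u} {G H : Multigraph V} {F : Multiset (Sym2 V)} {e f : Sym2 V}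
  {u v w x y : V} {k : ℕ}

open Classical in
theorem mem_induce_edges {S : Set V} :
    e ∈ (G.induce S).edges ↔ e ∈ G.edges ∧ ∀ v ∈ e, v ∈ S :=
  Multiset.mem_filter

section Reachable

@[refl]
theorem Reachable.refl (u : V) : G.Reachable u u :=
  Relation.ReflTransGen.refl

theorem Reachable.trans (huv : G.Reachable u v) (hvw : G.Reachable v w) : G.Reachable u w :=
  Relation.ReflTransGen.trans huv hvw

theorem Reachable.symm (h : G.Reachable u v) : G.Reachable v u := by
  induction h with
  | refl => rfl
  | tail _ hbc ih => exact .head (Sym2.eq_swap ▸ hbc) ih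

theorem reachable_comm : G.Reachable u v ↔ G.Reachable v u :=
  ⟨Reachable.symm, Reachable.symm⟩

theorem Reachable.mono (hGH : G.edges ⊆ H.edges) (h : G.Reachable u v) : H.Reachable u v :=
  Relation.ReflTransGen.mono (fun _ _ he => hGH he) _ _ h

theorem reachable_of_mem_edges (h : s(u, v) ∈ G.edges) : G.Reachable u v :=
  .single h

theorem Reachable.exists_boundary_edge {S : Set V} (h : G.Reachable u v) (hu : u ∈ S)
    (hv : v ∉ S) :
    ∃ a ∈ S, ∃ b ∉ S, s(a, b) ∈ G.edges ∧ (G.induce S).Reachable u a := by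
  induction h using Relation.ReflTransGen.head_induction_on with
  | refl => exact absurd hu hv
  | @head u c huc _ ih =>
    by_cases hc : c ∈ S
    · obtain ⟨a, ha, b, hb, hab, hca⟩ := ih hc
      have huc' : s(u, c) ∈ (G.induce S).edges := by simp [mem_induce_edges, huc, hu, hc]
      exact ⟨a, ha, b, hb, hab, (reachable_of_mem_edges huc').trans hca⟩
    · exact ⟨u, hu, c, hc, huc, .refl u⟩

theorem reachable_of_forall_boundary_edge_eq {S : Set V} {s t : V}
    (hS : ∀ a ∈ S, ∀ b ∉ S, s(a, b) ∈ G.edges → s(a, b) = e)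
    (hs : s ∈ S) (hx : x ∉ S) (hsx : G.Reachable s x)
    (ht : t ∈ S) (hy : y ∉ S) (hty : G.Reachable t y) : G.Reachable s t := by
  obtain ⟨a, ha, b, hb, hab, hsa⟩ := hsx.exists_boundary_edge hs hx
  obtain ⟨a', ha', b', hb', hab', hta'⟩ := hty.exists_boundary_edge ht hy
  have haa' : a = a' := by
    rcases Sym2.eq_iff.mp ((hS a ha b hb hab).trans (hS a' ha' b' hb' hab').symm) with h | h
    · exact h.1
    · exact absurd (h.1 ▸ ha) hb'
  have hle : (G.induce S).edges ⊆ G.edges := fun _ he => (mem_induce_edges.mp he).1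
  exact (hsa.mono hle).trans (haa' ▸ (hta'.mono hle).symm)

theorem reachable_of_chain {ℓ : ℕ} {X : Fin (ℓ + 1) → Set V} {p q : Fin (ℓ + 1)}
    (hX : ∀ i, ∀ u ∈ X i, ∀ v ∈ X i, G.Reachable u v)
    (hlink : ∀ j : Fin ℓ, p ≤ j.castSucc → j.castSucc < q →
      ∃ a ∈ X j.castSucc, ∃ b ∈ X j.succ, G.Reachable a b)
    (hpq : p ≤ q) (hu : u ∈ X p) (hv : v ∈ X q) : G.Reachable u v := by
  induction q using Fin.induction generalizing v with
  | zero => exact hX 0 u (Fin.le_zero_iff.mp hpq ▸ hu) v hv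
  | succ i ih =>
    rcases hpq.eq_or_lt with rfl | hlt
    · exact hX _ u hu v hv
    · have hpi : p ≤ i.castSucc := Fin.le_castSucc_iff.mpr hlt
      obtain ⟨a, ha, b, hb, hab⟩ := hlink i hpi i.castSucc_lt_succ
      have hua := ih (fun j hpj hji => hlink j hpj (hji.trans i.castSucc_lt_succ)) hpi ha
      exact (hua.trans hab).trans (hX _ b hb v hv)

end Reachable

section DeleteEdges

open Classical in
theorem deleteEdges_edges_subset : (G.deleteEdges F).edges ⊆ G.edges :=
  Multiset.subset_of_le tsub_le_self

open Classical in
theorem deleteEdges_edges_mono (h : G.edges ≤ H.edges) :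
    (G.deleteEdges F).edges ⊆ (H.deleteEdges F).edges :=
  Multiset.subset_of_le (tsub_le_tsub_right h F)

theorem deleteEdges_zero : G.deleteEdges 0 = G := by
  simp [deleteEdges]

open Classical in
theorem mem_deleteEdges_singleton_of_ne (hf : f ∈ G.edges) (hne : f ≠ e) :
    f ∈ (G.deleteEdges {e}).edges := by
  simpa [deleteEdges, Multiset.mem_erase_of_ne hne] using hf

end DeleteEdges

section AddEdge

open Classical in
theorem addEdge_self (G : Multigraph V) (x : V) : G.addEdge x x = G := by
  simp [addEdge, ofEdges, Multiset.filter_eq_self.mpr G.loopless]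

open Classical in
theorem addEdge_edges (G : Multigraph V) (hxy : x ≠ y) :
    (G.addEdge x y).edges = s(x, y) ::ₘ G.edges := by
  simpa [addEdge, ofEdges, hxy] using G.loopless

theorem edges_le_addEdge_edges : G.edges ≤ (G.addEdge x y).edges := by
  rcases eq_or_ne x y with rfl | hxy
  · rw [addEdge_self]
  · exact G.addEdge_edges hxy ▸ Multiset.le_cons_self _ _

open Classical in
theorem eq_or_mem_of_mem_deleteEdges_addEdge
    (h : f ∈ ((G.addEdge x y).deleteEdges F).edges) :
    f = s(x, y) ∨ f ∈ (G.deleteEdges F).edges := by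
  rcases eq_or_ne x y with rfl | hxy
  · exact .inr (G.addEdge_self x ▸ h)
  · refine or_iff_not_imp_left.mpr fun hf => ?_
    simpa only [deleteEdges, addEdge_edges G hxy, Multiset.mem_sub,
      Multiset.count_cons_of_ne hf] using h

open Classical in
/-- If `e` is itself parallel to the new edge, deleting one copy leaves the other. -/
theorem reachable_deleteEdges_addEdge (he : e ∈ G.edges) :
    ((G.addEdge x y).deleteEdges {e}).Reachable x y := by
  rcases eq_or_ne x y with rfl | hxy
  · rfl
  · apply reachable_of_mem_edges
    simp [deleteEdges, addEdge_edges G hxy, Multiset.erase_cons_tail_of_mem he]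

theorem Reachable.of_insert_edge (hH : ∀ f ∈ H.edges, f = s(x, y) ∨ f ∈ G.edges)
    (h : H.Reachable u v) :
    G.Reachable u v ∨ (G.Reachable u x ∧ G.Reachable y v) ∨
      (G.Reachable u y ∧ G.Reachable x v) := by
  induction h with
  | refl => exact .inl (.refl u)
  | @tail b c _ hbc ih =>
    rcases hH _ hbc with hnew | hold
    · rcases Sym2.eq_iff.mp hnew with ⟨rfl, rfl⟩ | ⟨rfl, rfl⟩
      · rcases ih with hub | ⟨hub, -⟩ | ⟨huc, -⟩
        exacts [.inr (.inl ⟨hub, .refl _⟩), .inr (.inl ⟨hub, .refl _⟩), .inl huc]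
      · rcases ih with hub | ⟨huc, -⟩ | ⟨hub, -⟩
        exacts [.inr (.inr ⟨hub, .refl _⟩), .inl huc, .inr (.inr ⟨hub, .refl _⟩)]
    · have hbc := reachable_of_mem_edges hold
      exact ih.imp (·.trans hbc) (Or.imp (And.imp_right (·.trans hbc))
        (And.imp_right (·.trans hbc)))

theorem Reachable.of_deleteEdges_addEdge
    (h : ((G.addEdge x y).deleteEdges F).Reachable u v) :
    (G.deleteEdges F).Reachable u v ∨
      ((G.deleteEdges F).Reachable u x ∧ (G.deleteEdges F).Reachable y v) ∨
      ((G.deleteEdges F).Reachable u y ∧ (G.deleteEdges F).Reachable x v) :=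
  h.of_insert_edge fun _ => eq_or_mem_of_mem_deleteEdges_addEdge

end AddEdge

section Lam

theorem le_lam_iff_s13 {n : ℕ∞} :
    n ≤ G.lam u v ↔ ∀ F ≤ G.edges, ¬ (G.deleteEdges F).Reachable u v → n ≤ F.card := by
  rw [lam, le_sInf_iff]
  refine ⟨fun h F hF hsep => h _ ⟨F, hF, hsep, rfl⟩, ?_⟩
  rintro h _ ⟨F, hF, hsep, rfl⟩
  exact h F hF hsep

open Classical in
theorem lam_le_card (h : ¬ (G.deleteEdges F).Reachable u v) : G.lam u v ≤ F.card := by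
  have hinter : G.deleteEdges (G.edges ∩ F) = G.deleteEdges F := by
    simp only [deleteEdges, Multiset.sub_inter]
  calc G.lam u v ≤ (G.edges ∩ F).card :=
        le_lam_iff_s13.mp le_rfl _ Multiset.inter_le_left (hinter ▸ h)
    _ ≤ F.card := by exact_mod_cast Multiset.card_le_card Multiset.inter_le_right

theorem lam_comm (G : Multigraph V) (u v : V) : G.lam u v = G.lam v u := by
  simp only [lam, reachable_comm (u := u)]

theorem le_lam_trans {n : ℕ∞} (huv : n ≤ G.lam u v) (hvw : n ≤ G.lam v w) : n ≤ G.lam u w := by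
  refine le_lam_iff_s13.mpr fun F hF hsep => ?_
  by_cases h : (G.deleteEdges F).Reachable u v
  · exact le_lam_iff_s13.mp hvw F hF fun h' => hsep (h.trans h')
  · exact le_lam_iff_s13.mp huv F hF h

theorem lam_mono (h : G.edges ≤ H.edges) (u v : V) : G.lam u v ≤ H.lam u v :=
  le_lam_iff_s13.mpr fun _ _ hsep => lam_le_card fun hr => hsep (hr.mono (deleteEdges_edges_mono h))

theorem two_le_lam_iff : 2 ≤ G.lam u v ↔ ∀ e, (G.deleteEdges {e}).Reachable u v := by
  refine ⟨fun h e => ?_, fun h => le_lam_iff_s13.mpr fun F _ hsep => ?_⟩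
  · by_contra hsep
    simpa using h.trans (lam_le_card hsep)
  · by_contra! hF
    have hF : F.card ≤ 1 := Nat.le_of_lt_succ (by exact_mod_cast hF)
    rcases Nat.le_one_iff_eq_zero_or_eq_one.mp hF with h0 | h1
    · rw [Multiset.card_eq_zero.mp h0, deleteEdges_zero] at hsep
      exact hsep ((h s(u, u)).mono deleteEdges_edges_subset)
    · obtain ⟨e, rfl⟩ := Multiset.card_eq_one.mp h1
      exact hsep (h e)

end Lam

section Component

variable {C D : Set V}

theorem isKEdgeConnectedComponent_iff_of_mem (hv : v ∈ C) :
    G.IsKEdgeConnectedComponent k C ↔ C = {u | k ≤ G.lam u v} := by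
  constructor
  · rintro ⟨hC, hmax⟩
    refine (hmax _ (fun u hu => hC u hu v hv) fun u hu w hw => ?_).symm
    exact le_lam_trans hu (G.lam_comm w v ▸ hw)
  · rintro rfl
    refine ⟨fun u hu w hw => le_lam_trans hu (G.lam_comm w v ▸ hw), fun D hCD hD => ?_⟩
    exact Set.Subset.antisymm (fun u hu => hD u hu v (hCD hv)) hCD

theorem IsKEdgeConnectedComponent.mem_of_le_lam (hC : G.IsKEdgeConnectedComponent k C)
    (hv : v ∈ C) (h : k ≤ G.lam u v) : u ∈ C := by
  rw [(isKEdgeConnectedComponent_iff_of_mem hv).mp hC]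
  exact h

theorem IsKEdgeConnectedComponent.eq_of_mem (hC : G.IsKEdgeConnectedComponent k C)
    (hD : G.IsKEdgeConnectedComponent k D) (hvC : v ∈ C) (hvD : v ∈ D) : C = D :=
  ((isKEdgeConnectedComponent_iff_of_mem hvC).mp hC).trans
    ((isKEdgeConnectedComponent_iff_of_mem hvD).mp hD).symm

end Component

section Separation

theorem lam_addEdge_le_card_of_reachable (hx : ¬ (G.deleteEdges {e}).Reachable u x)
    (hy : ¬ (G.deleteEdges {e}).Reachable u y) (hv : (G.deleteEdges {e}).Reachable u v)
    (hsep : ¬ (G.deleteEdges F).Reachable u v) : (G.addEdge x y).lam u v ≤ F.card := by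
  let S : Set V := {t | (G.deleteEdges {e}).Reachable u t}
  have hS : ∀ a ∈ S, ∀ b ∉ S, s(a, b) ∈ (G.deleteEdges F).edges → s(a, b) = e := by
    intro a ha b hb hab
    by_contra hne
    have hab' := mem_deleteEdges_singleton_of_ne (deleteEdges_edges_subset hab) hne
    exact hb (Reachable.trans ha (reachable_of_mem_edges hab'))
  have huS : u ∈ S := .refl u
  refine lam_le_card fun h => hsep ?_
  rcases h.of_deleteEdges_addEdge with huv | ⟨hux, hyv⟩ | ⟨huy, hxv⟩
  · exact huv
  · exact reachable_of_forall_boundary_edge_eq hS huS hx hux hv hy hyv.symm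
  · exact reachable_of_forall_boundary_edge_eq hS huS hy huy hv hx hxv.symm

theorem lam_addEdge_le_one (hx : ¬ (G.deleteEdges {e}).Reachable u x)
    (hy : ¬ (G.deleteEdges {e}).Reachable u y) (hv : ¬ (G.deleteEdges {e}).Reachable u v) :
    (G.addEdge x y).lam u v ≤ 1 := by
  have hsep : ¬ ((G.addEdge x y).deleteEdges {e}).Reachable u v := fun h => by
    rcases h.of_deleteEdges_addEdge with huv | ⟨hux, -⟩ | ⟨huy, -⟩
    exacts [hv huv, hx hux, hy huy]
  simpa using lam_le_card hsep

theorem reachable_of_reachable_addEdge (hxy : G.Reachable x y)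
    (h : (G.addEdge x y).Reachable u v) : G.Reachable u v := by
  have hedges : ∀ f ∈ (G.addEdge x y).edges, f = s(x, y) ∨ f ∈ G.edges := by
    simpa only [deleteEdges_zero] using
      fun f => eq_or_mem_of_mem_deleteEdges_addEdge (G := G) (F := 0) (f := f)
  rcases h.of_insert_edge hedges with huv | ⟨hux, hyv⟩ | ⟨huy, hxv⟩
  exacts [huv, hux.trans (hxy.trans hyv), huy.trans (hxy.symm.trans hxv)]

theorem lam_addEdge_eq_of_separated (hxy : G.Reachable x y)
    (hx : ¬ (G.deleteEdges {e}).Reachable u x) (hy : ¬ (G.deleteEdges {e}).Reachable u y)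
    (v : V) : (G.addEdge x y).lam u v = G.lam u v := by
  refine le_antisymm (le_lam_iff_s13.mpr fun F _ hsep => ?_) (lam_mono edges_le_addEdge_edges u v)
  by_cases hv : (G.deleteEdges {e}).Reachable u v
  · exact lam_addEdge_le_card_of_reachable hx hy hv hsep
  · rcases eq_or_ne F 0 with rfl | hF
    · rw [deleteEdges_zero] at hsep
      exact lam_le_card (deleteEdges_zero.symm ▸ mt (reachable_of_reachable_addEdge hxy) hsep)
    · have hcard : 1 ≤ F.card := Multiset.card_pos.mpr hF
      exact (lam_addEdge_le_one hx hy hv).trans (by exact_mod_cast hcard)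

/-- The separating edge is the one through which a walk from `u` first enters `U`. -/
theorem exists_deleteEdges_singleton_separating {U : Set V}
    (hclosed : ∀ z ∈ U, ∀ w, 2 ≤ G.lam w z → w ∈ U)
    (hU : ∀ e ∉ (G.induce U).edges, ∀ p ∈ U, ∀ q ∈ U, (G.deleteEdges {e}).Reachable p q)
    (hu : u ∉ U) : ∃ e, ∀ z ∈ U, ¬ (G.deleteEdges {e}).Reachable u z := by
  by_cases hreach : ∃ z ∈ U, G.Reachable u z
  · obtain ⟨z₀, hz₀, huz₀⟩ := hreach
    obtain ⟨w, hw, w', hw', hww', huw⟩ :=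
      huz₀.exists_boundary_edge (S := Uᶜ) hu (Set.notMem_compl_iff.mpr hz₀)
    rw [Set.notMem_compl_iff] at hw'
    have hcross : s(w, w') ∉ (G.induce U).edges :=
      fun h => hw ((mem_induce_edges.mp h).2 w (Sym2.mem_mk_left w w'))
    have havoid : (G.induce Uᶜ).edges ⊆ (G.deleteEdges {s(w, w')}).edges := by
      intro f hf
      obtain ⟨hfG, hfU⟩ := mem_induce_edges.mp hf
      refine mem_deleteEdges_singleton_of_ne hfG ?_
      rintro rfl
      exact hfU w' (Sym2.mem_mk_right w w') hw'
    refine ⟨s(w, w'), fun z hz huz => hw (hclosed w' hw' w (two_le_lam_iff.mpr fun e => ?_))⟩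
    rcases eq_or_ne s(w, w') e with rfl | hne
    · exact ((huw.mono havoid).symm.trans huz).trans (hU _ hcross z hz w' hw')
    · exact reachable_of_mem_edges (mem_deleteEdges_singleton_of_ne hww' hne)
  · push Not at hreach
    exact ⟨s(u, u), fun z hz huz => hreach z hz (huz.mono deleteEdges_edges_subset)⟩

end Separation

/-- The `k`-edge-connected components `X 0, …, X ℓ` form a path in the multigraph obtained from `G`
by contracting each `k`-edge-connected component: they are distinct, and consecutive ones are joined
by an edge of `G`. For `k = 2` and `G` connected, this is a path in the tree `T` of bridges. -/
structure IsComponentPath (G : Multigraph V) (k : ℕ) {ℓ : ℕ} (X : Fin (ℓ + 1) → Set V) : Prop where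
  isComponent : ∀ i, G.IsKEdgeConnectedComponent k (X i)
  injective : Function.Injective X
  exists_edge : ∀ i : Fin ℓ, ∃ a ∈ X i.castSucc, ∃ b ∈ X i.succ, s(a, b) ∈ G.edges

namespace IsComponentPath

variable {ℓ : ℕ} {X : Fin (ℓ + 1) → Set V}

theorem index_eq (hX : G.IsComponentPath k X) {i j : Fin (ℓ + 1)} (hi : v ∈ X i) (hj : v ∈ X j) :
    i = j :=
  hX.injective ((hX.isComponent i).eq_of_mem (hX.isComponent j) hi hj)

theorem index_eq_of_edge_eq (hX : G.IsComponentPath k X) {i j : Fin ℓ} {a b a' b' : V}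
    (ha : a ∈ X i.castSucc) (hb : b ∈ X i.succ) (ha' : a' ∈ X j.castSucc) (hb' : b' ∈ X j.succ)
    (h : s(a, b) = s(a', b')) : i = j := by
  rcases Sym2.eq_iff.mp h with ⟨rfl, -⟩ | ⟨rfl, rfl⟩
  · exact Fin.castSucc_injective _ (hX.index_eq ha ha')
  · have hij : i.castSucc = j.succ := hX.index_eq ha hb'
    have hji : i.succ = j.castSucc := hX.index_eq hb ha'
    simp only [Fin.ext_iff, Fin.val_castSucc, Fin.val_succ] at hij hji
    omega

theorem mem_iUnion_of_le_lam (hX : G.IsComponentPath k X) (hv : v ∈ ⋃ i, X i)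
    (h : k ≤ G.lam u v) : u ∈ ⋃ i, X i := by
  obtain ⟨i, hi⟩ := Set.mem_iUnion.mp hv
  exact Set.mem_iUnion.mpr ⟨i, (hX.isComponent i).mem_of_le_lam hi h⟩

theorem reachable_deleteEdges_of_mem (hX : G.IsComponentPath 2 X) (e : Sym2 V) (i : Fin (ℓ + 1)) :
    ∀ u ∈ X i, ∀ v ∈ X i, (G.deleteEdges {e}).Reachable u v :=
  fun u hu v hv => two_le_lam_iff.mp ((hX.isComponent i).1 u hu v hv) e

theorem reachable_deleteEdges_of_notMem (hX : G.IsComponentPath 2 X)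
    (he : e ∉ (G.induce (⋃ i, X i)).edges) (hu : u ∈ ⋃ i, X i) (hv : v ∈ ⋃ i, X i) :
    (G.deleteEdges {e}).Reachable u v := by
  have hlink (j : Fin ℓ) :
      ∃ a ∈ X j.castSucc, ∃ b ∈ X j.succ, (G.deleteEdges {e}).Reachable a b := by
    obtain ⟨a, ha, b, hb, hab⟩ := hX.exists_edge j
    have hab_mem : s(a, b) ∈ (G.induce (⋃ i, X i)).edges := by
      simpa [mem_induce_edges, hab] using ⟨⟨_, ha⟩, ⟨_, hb⟩⟩
    have hne : s(a, b) ≠ e := fun h => he (h ▸ hab_mem)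
    exact ⟨a, ha, b, hb, reachable_of_mem_edges (mem_deleteEdges_singleton_of_ne hab hne)⟩
  obtain ⟨p, hp⟩ := Set.mem_iUnion.mp hu
  obtain ⟨q, hq⟩ := Set.mem_iUnion.mp hv
  have hmem := hX.reachable_deleteEdges_of_mem e
  rcases le_total p q with hpq | hqp
  · exact reachable_of_chain hmem (fun j _ _ => hlink j) hpq hp hq
  · exact (reachable_of_chain hmem (fun j _ _ => hlink j) hqp hq hp).symm

theorem reachable (hX : G.IsComponentPath 2 X) (hu : u ∈ ⋃ i, X i) (hv : v ∈ ⋃ i, X i) :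
    G.Reachable u v := by
  have hloop : s(u, u) ∉ (G.induce (⋃ i, X i)).edges := fun h =>
    (G.induce _).loopless _ h (Sym2.mk_isDiag_iff.mpr rfl)
  exact (hX.reachable_deleteEdges_of_notMem hloop hu hv).mono deleteEdges_edges_subset

/-- The edges joining consecutive components are distinct, so deleting `e` cannot break the path
both before and after the component of `u`. -/
theorem reachable_deleteEdges_or (hX : G.IsComponentPath 2 X) (hx : x ∈ X 0)
    (hy : y ∈ X (Fin.last ℓ)) (hu : u ∈ ⋃ i, X i) (e : Sym2 V) :
    (G.deleteEdges {e}).Reachable x u ∨ (G.deleteEdges {e}).Reachable u y := by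
  obtain ⟨p, hp⟩ := Set.mem_iUnion.mp hu
  choose a ha b hb hab using hX.exists_edge
  have hmem := hX.reachable_deleteEdges_of_mem e
  have hlink {j : Fin ℓ} (hj : s(a j, b j) ≠ e) :
      ∃ a ∈ X j.castSucc, ∃ b ∈ X j.succ, (G.deleteEdges {e}).Reachable a b :=
    ⟨a j, ha j, b j, hb j, reachable_of_mem_edges (mem_deleteEdges_singleton_of_ne (hab j) hj)⟩
  by_cases hbefore : ∀ j : Fin ℓ, j.castSucc < p → s(a j, b j) ≠ e
  · exact .inl (reachable_of_chain hmem (fun j _ hj => hlink (hbefore j hj)) p.zero_le hx hp)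
  · push Not at hbefore
    obtain ⟨i, hip, hie⟩ := hbefore
    have hafter (j : Fin ℓ) (hpj : p ≤ j.castSucc) : s(a j, b j) ≠ e := by
      rintro hje
      have hij : i = j := hX.index_eq_of_edge_eq (ha i) (hb i) (ha j) (hb j) (hie.trans hje.symm)
      exact (hij ▸ hip).not_ge hpj
    exact .inr (reachable_of_chain hmem (fun j hj _ => hlink (hafter j hj)) p.le_last hp hy)

theorem two_le_lam_addEdge (hX : G.IsComponentPath 2 X) (hx : x ∈ X 0) (hy : y ∈ X (Fin.last ℓ))
    (hu : u ∈ ⋃ i, X i) (hv : v ∈ ⋃ i, X i) : 2 ≤ (G.addEdge x y).lam u v := by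
  refine two_le_lam_iff.mpr fun e => ?_
  have hmono : (G.deleteEdges {e}).edges ⊆ ((G.addEdge x y).deleteEdges {e}).edges :=
    deleteEdges_edges_mono edges_le_addEdge_edges
  by_cases he : e ∈ G.edges
  · have hto {w : V} (hw : w ∈ ⋃ i, X i) : ((G.addEdge x y).deleteEdges {e}).Reachable x w := by
      rcases hX.reachable_deleteEdges_or hx hy hw e with hxw | hwy
      · exact hxw.mono hmono
      · exact (reachable_deleteEdges_addEdge he).trans (hwy.mono hmono).symm
    exact (hto hu).symm.trans (hto hv)
  · have he' : e ∉ (G.induce (⋃ i, X i)).edges := fun h => he (mem_induce_edges.mp h).1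
    exact (hX.reachable_deleteEdges_of_notMem he' hu hv).mono hmono

theorem lam_addEdge_eq_of_notMem (hX : G.IsComponentPath 2 X) (hx : x ∈ ⋃ i, X i)
    (hy : y ∈ ⋃ i, X i) (hu : u ∉ ⋃ i, X i) (v : V) : (G.addEdge x y).lam u v = G.lam u v := by
  obtain ⟨e, he⟩ := exists_deleteEdges_singleton_separating
    (fun _ hz _ h => hX.mem_iUnion_of_le_lam hz h)
    (fun _ he _ hp _ hq => hX.reachable_deleteEdges_of_notMem he hp hq) hu
  exact lam_addEdge_eq_of_separated (hX.reachable hx hy) (he x hx) (he y hy) v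

end IsComponentPath

end Multigraph

theorem insert_bridge_case_two_edge_components_general {V : Type u} (G : Multigraph V) (x y : V)
    (ℓ : ℕ) (X : Fin (ℓ + 1) → Set V) (hX : G.IsComponentPath 2 X)
    (hx : x ∈ X 0) (hy : y ∈ X (Fin.last ℓ)) :
    (∀ u ∈ ⋃ i, X i, ∀ v ∈ ⋃ i, X i, (2 : ℕ∞) ≤ (G.addEdge x y).lam u v) ∧
      (∀ u v : V, ¬(u ∈ ⋃ i, X i ∧ v ∈ ⋃ i, X i) →
        (G.addEdge x y).lam u v = G.lam u v) ∧
      (G.addEdge x y).IsKEdgeConnectedComponent 2 (⋃ i, X i) := by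
  have hxU : x ∈ ⋃ i, X i := Set.mem_iUnion_of_mem 0 hx
  have hyU : y ∈ ⋃ i, X i := Set.mem_iUnion_of_mem (Fin.last ℓ) hy
  have hin : ∀ u ∈ ⋃ i, X i, ∀ v ∈ ⋃ i, X i, (2 : ℕ∞) ≤ (G.addEdge x y).lam u v :=
    fun u hu v hv => hX.two_le_lam_addEdge hx hy hu hv
  have hout : ∀ u ∉ ⋃ i, X i, ∀ v, (G.addEdge x y).lam u v = G.lam u v :=
    fun u hu v => hX.lam_addEdge_eq_of_notMem hxU hyU hu v
  refine ⟨hin, fun u v huv => ?_, ?_⟩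
  · by_cases hu : u ∈ ⋃ i, X i
    · rw [Multigraph.lam_comm, G.lam_comm]
      exact hout v (fun hv => huv ⟨hu, hv⟩) u
    · exact hout u hu v
  · refine (Multigraph.isKEdgeConnectedComponent_iff_of_mem hxU).mpr
      (Set.Subset.antisymm (fun u hu => hin u hu x hxU) fun u hu => ?_)
    by_contra huU
    exact huU (hX.mem_iUnion_of_le_lam hxU (hout u huU x ▸ hu))

theorem insert_bridge_case_two_edge_components {V : Type u} [Fintype V]
    (G : Multigraph V) (x y : V) (hxy : x ≠ y)
    (hconn : ∀ u v : V, G.Reachable u v)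
    (hlam : G.lam x y = 1)
    (ℓ : ℕ) (X : Fin (ℓ + 1) → Set V)
    (hcomp : ∀ i, G.IsKEdgeConnectedComponent 2 (X i))
    (hinj : Function.Injective X)
    (hx : x ∈ X 0) (hy : y ∈ X (Fin.last ℓ))
    (hpath : ∀ i : Fin ℓ, ∃ a ∈ X i.castSucc, ∃ b ∈ X i.succ, s(a, b) ∈ G.edges) :
    (∀ u ∈ ⋃ i, X i, ∀ v ∈ ⋃ i, X i, (2 : ℕ∞) ≤ (G.addEdge x y).lam u v) ∧
      (∀ u v : V, ¬(u ∈ ⋃ i, X i ∧ v ∈ ⋃ i, X i) →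
        (G.addEdge x y).lam u v = G.lam u v) ∧
      (G.addEdge x y).IsKEdgeConnectedComponent 2 (⋃ i, X i) :=
  insert_bridge_case_two_edge_components_general G x y ℓ X ⟨hcomp, hinj, hpath⟩ hx hy
end

section
/- Let k ≥ 1 and let G be a multigraph with n ≥ 1 vertices. Then G has at most (k−1)(n−1) k-interconnection edges. -/
universe u

namespace Multigraph

variable {V : Type u}

/-- `e` is a `k`-interconnection edge: its two endpoints lie in different maximal
`k`-edge-connected subgraphs of `G`. -/
def IsInterconnectionEdge (G : Multigraph V) (k : ℕ) (e : Sym2 V) : Prop :=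
  ¬ ∃ S : Set V, G.IsMaxKEdgeConnectedSubgraph k S ∧ ∀ v ∈ e, v ∈ S

open Classical in
/-- The multiset of `k`-interconnection edges of `G`. -/
noncomputable def interEdges (G : Multigraph V) (k : ℕ) : Multiset (Sym2 V) :=
  G.edges.filter (G.IsInterconnectionEdge k)

end Multigraph

/-!
If `S` is not `k`-edge-connected, some cut splits `S` into two nonempty parts with at most `k - 1`
edges of `G[S]` between them. Starting from the whole vertex set, split recursively until every part
is `k`-edge-connected. Such a part contains no interconnection edge, so every interconnection edge
crosses one of the splits, and `n` vertices allow at most `n - 1` splits.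
-/

namespace Multigraph

variable {V : Type u}

open Classical in
/-- The edge cut `δ(A)`: the edges of `G`, with multiplicity, having one endpoint in `A` and the
other outside. -/
noncomputable def edgeCut (G : Multigraph V) (A : Set V) : Multiset (Sym2 V) :=
  G.edges.filter fun e => (∃ v ∈ e, v ∈ A) ∧ ∃ v ∈ e, v ∉ A

theorem edgeCut_setOf_reachable (G : Multigraph V) (x : V) :
    G.edgeCut {v | G.Reachable x v} = 0 := by
  classical
  refine Multiset.filter_eq_nil.2 ?_
  rintro e he ⟨⟨v, hve, hv⟩, w, hwe, hw⟩
  have hvw : v ≠ w := fun h => hw (h ▸ hv)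
  obtain rfl := (Sym2.mem_and_mem_iff hvw).1 ⟨hve, hwe⟩
  exact hw (Relation.ReflTransGen.tail hv he)

theorem edgeCut_le_of_edgeCut_deleteEdges_eq_zero {G : Multigraph V} {F : Multiset (Sym2 V)}
    {A : Set V} (h : (G.deleteEdges F).edgeCut A = 0) : G.edgeCut A ≤ F := by
  classical
  rw [edgeCut, deleteEdges, Multiset.filter_sub, tsub_eq_zero_iff_le] at h
  exact h.trans (Multiset.filter_le _ F)

theorem exists_card_edgeCut_lt_of_lam_lt {G : Multigraph V} {x y : V} {n : ℕ∞}
    (h : G.lam x y < n) : ∃ A, x ∈ A ∧ y ∉ A ∧ (G.edgeCut A).card < n := by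
  obtain ⟨_, ⟨F, -, hxy, rfl⟩, hF⟩ := sInf_lt_iff.1 h
  refine ⟨{v | (G.deleteEdges F).Reachable x v}, Relation.ReflTransGen.refl, hxy, ?_⟩
  have hle : G.edgeCut {v | (G.deleteEdges F).Reachable x v} ≤ F :=
    edgeCut_le_of_edgeCut_deleteEdges_eq_zero (edgeCut_setOf_reachable _ x)
  exact lt_of_le_of_lt (mod_cast Multiset.card_le_card hle) hF

theorem exists_card_edgeCut_lt_of_not_isKEdgeConnectedSet {G : Multigraph V} {k : ℕ} {S : Set V}
    (hS : S.Nonempty) (h : ¬ G.IsKEdgeConnectedSet k S) :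
    ∃ A, (S ∩ A).Nonempty ∧ (S \ A).Nonempty ∧ ((G.induce S).edgeCut A).card < k := by
  simp only [IsKEdgeConnectedSet, hS, true_and, not_forall, not_le] at h
  obtain ⟨x, hx, y, hy, hlam⟩ := h
  obtain ⟨A, hxA, hyA, hcard⟩ := exists_card_edgeCut_lt_of_lam_lt hlam
  exact ⟨A, ⟨x, hx, hxA⟩, ⟨y, hy, hyA⟩, mod_cast hcard⟩

theorem induce_univ_edges (G : Multigraph V) : (G.induce Set.univ).edges = G.edges := by
  simp [induce]

theorem induce_edges_eq_inter_add_sdiff_add_edgeCut (G : Multigraph V) (S A : Set V) :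
    (G.induce S).edges =
      (G.induce (S ∩ A)).edges + (G.induce (S \ A)).edges + (G.induce S).edgeCut A := by
  classical
  ext e
  induction e with
  | _ a b =>
    by_cases ha : a ∈ A <;> by_cases hb : b ∈ A <;>
      simp [induce, edgeCut, Multiset.count_filter, ha, hb]

theorem countP_induce_edges_le (G : Multigraph V) (p : Sym2 V → Prop) [DecidablePred p]
    (S A : Set V) :
    (G.induce S).edges.countP p ≤
      (G.induce (S ∩ A)).edges.countP p + (G.induce (S \ A)).edges.countP p +
        ((G.induce S).edgeCut A).card := by
  rw [G.induce_edges_eq_inter_add_sdiff_add_edgeCut S A, Multiset.countP_add, Multiset.countP_add]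
  gcongr
  exact Multiset.countP_le_card _ _

theorem IsKEdgeConnectedSet.exists_isMaxKEdgeConnectedSubgraph [Finite V] {G : Multigraph V}
    {k : ℕ} {T : Set V} (hT : G.IsKEdgeConnectedSet k T) :
    ∃ S, T ⊆ S ∧ G.IsMaxKEdgeConnectedSubgraph k S := by
  obtain ⟨S, hTS, hS⟩ := (Set.toFinite {S | G.IsKEdgeConnectedSet k S}).exists_le_maximal hT
  exact ⟨S, hTS, hS.prop, fun _ hSU hU => hS.eq_of_ge hU hSU⟩

theorem IsKEdgeConnectedSet.not_isInterconnectionEdge [Finite V] {G : Multigraph V} {k : ℕ}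
    {T : Set V} (hT : G.IsKEdgeConnectedSet k T) {e : Sym2 V} (he : ∀ v ∈ e, v ∈ T) :
    ¬ G.IsInterconnectionEdge k e := by
  obtain ⟨S, hTS, hS⟩ := hT.exists_isMaxKEdgeConnectedSubgraph
  exact not_not_intro ⟨S, hS, fun v hv => hTS (he v hv)⟩

open Classical in
theorem IsKEdgeConnectedSet.countP_isInterconnectionEdge_induce [Finite V] {G : Multigraph V}
    {k : ℕ} {S : Set V} (hS : G.IsKEdgeConnectedSet k S) :
    (G.induce S).edges.countP (G.IsInterconnectionEdge k) = 0 :=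
  Multiset.countP_eq_zero.2 fun _ he =>
    hS.not_isInterconnectionEdge (Multiset.mem_filter.1 he).2

open Classical in
/-- Adding `k - 1` on the left, instead of subtracting `1` from `S.ncard`, avoids truncation and
lets the bounds for the two parts of a split simply add up. -/
theorem countP_isInterconnectionEdge_induce_add_le [Finite V] (G : Multigraph V) (k : ℕ)
    {S : Set V} (hS : S.Nonempty) :
    (G.induce S).edges.countP (G.IsInterconnectionEdge k) + (k - 1) ≤ (k - 1) * S.ncard := by
  induction hn : S.ncard using Nat.strong_induction_on generalizing S with
  | _ n ih =>
    subst hn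
    by_cases hconn : G.IsKEdgeConnectedSet k S
    · rw [hconn.countP_isInterconnectionEdge_induce, zero_add]
      exact Nat.le_mul_of_pos_right _ hS.ncard_pos
    · obtain ⟨A, hin, hout, hcut⟩ := exists_card_edgeCut_lt_of_not_isKEdgeConnectedSet hS hconn
      have hcard : (S ∩ A).ncard + (S \ A).ncard = S.ncard :=
        Set.ncard_inter_add_ncard_sdiff_eq_ncard S A
      have hin_pos : 0 < (S ∩ A).ncard := hin.ncard_pos
      have hout_pos : 0 < (S \ A).ncard := hout.ncard_pos
      have hin_le := ih _ (by omega) hin rfl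
      have hout_le := ih _ (by omega) hout rfl
      have hsplit := G.countP_induce_edges_le (G.IsInterconnectionEdge k) S A
      rw [← hcard, mul_add]
      omega

end Multigraph

theorem interconnection_edges_card_le {V : Type u} [Fintype V]
    (k : ℕ) (hk : 1 ≤ k) (G : Multigraph V) (hn : 1 ≤ Fintype.card V) :
    Multiset.card (G.interEdges k) ≤ (k - 1) * (Fintype.card V - 1) := by
  classical
  have : Nonempty V := Fintype.card_pos_iff.1 hn
  have h := G.countP_isInterconnectionEdge_induce_add_le k Set.univ_nonempty
  rw [G.induce_univ_edges, Set.ncard_univ, Nat.card_eq_fintype_card] at h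
  rw [Multigraph.interEdges, ← Multiset.countP_eq_card_filter, Nat.mul_sub_one]
  exact Nat.le_sub_of_add_le h
end
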